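/- Let F = ℝ or ℂ, let T ⊆ Mat_n(F) be a unital subalgebra closed under conjugate-transpose, E ∈ T a self-adjoint idempotent, and W, W' irreducible T-submodules of Fⁿ with dim(EW) = dim(EW') = 1. Suppose K ∈ ETE is a matrix generating ETE on W and on W' (together with E), with Kw = μw for 0 ≠ w ∈ EW and Kw' = μ'w' for 0 ≠ w' ∈ EW'. If μ = μ', then W and W' are isomorphic as T-modules; conversely, if W ≅ W' then μ = μ'. -/

import Mathlib

/-!
Write `w = Ew`, and similarly `w' = Ew'`. By irreducibility `W = Tw` and `W' = Tw'`.

If `μ = μ'`, the candidate isomorphism is `Bw ↦ Bw'` for `B ∈ T`. It is well defined and injective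
because `Bw = 0 ↔ Bw' = 0`: since `E` is self-adjoint, `⟨Bw, Bw⟩ = ⟨w, (E Bᴴ B E) w⟩`, and
`E Bᴴ B E` acts on `EW` and `EW'` as one and the same polynomial `q` in `K`, so that
`‖Bw‖² = q(μ) ‖w‖²` and `‖Bw'‖² = q(μ) ‖w'‖²`. Both vanish exactly when `q(μ) = 0`.

Conversely an isomorphism `σ` commutes with `E`, hence sends `w` to a nonzero element of the line
`EW' = F w'`; as `σ` also commutes with `K`, the two eigenvalues agree.
-/

open Matrix

/-- `W` is invariant under all matrices in `T`. -/
def Invar {n : ℕ} {F : Type*} [Field F] (T : Set (Matrix (Fin n) (Fin n) F))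
    (W : Submodule F (Fin n → F)) : Prop :=
  ∀ B ∈ T, ∀ w ∈ W, B.mulVec w ∈ W

/-- An irreducible `T`-module. -/
def IsIrred {n : ℕ} {F : Type*} [Field F] (T : Set (Matrix (Fin n) (Fin n) F))
    (W : Submodule F (Fin n → F)) : Prop :=
  W ≠ ⊥ ∧ Invar T W ∧
    ∀ U : Submodule F (Fin n → F), U ≤ W → Invar T U → U = ⊥ ∨ U = W

/-- `W` and `W'` are isomorphic as `T`-modules. -/
def TIso {n : ℕ} {F : Type*} [Field F] (T : Set (Matrix (Fin n) (Fin n) F))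
    (W W' : Submodule F (Fin n → F)) : Prop :=
  ∃ σ : (Fin n → F) →ₗ[F] (Fin n → F),
    Set.BijOn σ (W : Set (Fin n → F)) (W' : Set (Fin n → F)) ∧
    ∀ B ∈ T, ∀ v ∈ W, σ (B.mulVec v) = B.mulVec (σ v)

/-- A polynomial in `K` acts on an eigenvector of `K` by its value at the eigenvalue. -/
lemma aeval_mulVec_eigen {n : ℕ} {F : Type*} [Field F] (K : Matrix (Fin n) (Fin n) F)
    (q : Polynomial F) (w : Fin n → F) (μ : F) (h : K.mulVec w = μ • w) :
    (Polynomial.aeval K q).mulVec w = q.eval μ • w := by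
  induction q using Polynomial.induction_on' with
  | add p q hp hq => simp [Matrix.add_mulVec, hp, hq, add_smul]
  | monomial k a =>
    have hk : (K ^ k).mulVec w = μ ^ k • w := by
      induction k with
      | zero => simp
      | succ k ih =>
        rw [pow_succ, ← Matrix.mulVec_mulVec, h, Matrix.mulVec_smul, ih, smul_smul, pow_succ,
          mul_comm]
    rw [Polynomial.aeval_monomial, Polynomial.eval_monomial, ← Matrix.mulVec_mulVec, hk,
      Matrix.mulVec_smul, Algebra.algebraMap_eq_smul_one, Matrix.smul_mulVec, Matrix.one_mulVec,
      smul_smul, mul_comm]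

/-- The orbit map `B ↦ Bw` on `T`. -/
def orbitMap {n : ℕ} {F : Type*} [Field F] (T : Subalgebra F (Matrix (Fin n) (Fin n) F))
    (w : Fin n → F) : T →ₗ[F] (Fin n → F) where
  toFun B := (B : Matrix (Fin n) (Fin n) F).mulVec w
  map_add' A B := by simp [Matrix.add_mulVec]
  map_smul' c B := by simp [Matrix.smul_mulVec]

/-- An irreducible module is generated by any of its nonzero vectors. -/
lemma range_orbitMap {n : ℕ} {F : Type*} [Field F]
    (T : Subalgebra F (Matrix (Fin n) (Fin n) F)) (W : Submodule F (Fin n → F))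
    (hW : IsIrred (T : Set (Matrix (Fin n) (Fin n) F)) W) (w : Fin n → F) (hw : w ∈ W)
    (hw0 : w ≠ 0) : LinearMap.range (orbitMap T w) = W := by
  obtain ⟨-, hinv, hirr⟩ := hW
  refine (hirr _ ?_ ?_).resolve_left fun h => hw0 ?_
  · rintro _ ⟨B, rfl⟩
    exact hinv B B.2 w hw
  · rintro A hA _ ⟨B, rfl⟩
    exact ⟨⟨A, hA⟩ * B, (Matrix.mulVec_mulVec w A B).symm⟩
  · have : orbitMap T w 1 ∈ LinearMap.range (orbitMap T w) := ⟨1, rfl⟩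
    rw [h, Submodule.mem_bot] at this
    simpa [orbitMap] using this

open scoped ComplexOrder in
/-- If `w = Ew` is an eigenvector of `E Bᴴ B E` with eigenvalue `c`, then `‖Bw‖² = c ‖w‖²`,
so `Bw = 0` is decided by `c` alone. -/
lemma mulVec_eq_zero_iff_of_eigen {n : ℕ} {F : Type*} [RCLike F]
    (E B : Matrix (Fin n) (Fin n) F) (hEs : Eᴴ = E) (w : Fin n → F) (hEw : E.mulVec w = w)
    (hw0 : w ≠ 0) (c : F) (h : (E * (Bᴴ * B) * E).mulVec w = c • w) :
    B.mulVec w = 0 ↔ c = 0 := by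
  have hM : E * (Bᴴ * B) * E = (B * E)ᴴ * (B * E) := by
    rw [Matrix.conjTranspose_mul, hEs]; simp only [Matrix.mul_assoc]
  have hBE : (B * E).mulVec w = B.mulVec w := by rw [← Matrix.mulVec_mulVec, hEw]
  rw [← hBE, ← Matrix.conjTranspose_mul_self_mulVec_eq_zero, ← hM, h, smul_eq_zero]
  simp [hw0]

/-- If `ker f ≤ ker g` then `g` factors through `f`, by a map defined on the whole target of `f`. -/
lemma exists_comp_eq_of_ker_le {F V U : Type*} [Field F] [AddCommGroup V] [Module F V]
    [AddCommGroup U] [Module F U] (f g : V →ₗ[F] U)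
    (h : LinearMap.ker f ≤ LinearMap.ker g) : ∃ σ : U →ₗ[F] U, ∀ v, σ (f v) = g v := by
  obtain ⟨l, hl⟩ := LinearMap.exists_leftInverse_of_injective
    ((LinearMap.ker f).liftQ f le_rfl) (Submodule.ker_liftQ_eq_bot' _ f rfl)
  refine ⟨(LinearMap.ker f).liftQ g h ∘ₗ l, fun v => ?_⟩
  have := LinearMap.congr_fun hl (Submodule.Quotient.mk v)
  simp only [LinearMap.comp_apply, Submodule.liftQ_apply, LinearMap.id_apply] at this
  simp [this]

/-- Let `F = ℝ` or `ℂ`, `T ⊆ Mat_n(F)` a unital subalgebra closed under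
conjugate-transpose, `E ∈ T` a self-adjoint idempotent, and `W, W'` irreducible
`T`-modules with `dim EW = dim EW' = 1`. Suppose `K ∈ ETE` generates `ETE`
(together with `E`) on `W` and on `W'`, with `Kw = μw` on `EW` and `Kw' = μ'w'`
on `EW'`. Then `W ≅ W'` as `T`-modules iff `μ = μ'`. -/
theorem stmt_13 {n : ℕ} {F : Type*} [RCLike F]
    (T : Subalgebra F (Matrix (Fin n) (Fin n) F))
    (hTc : ∀ B ∈ T, Bᴴ ∈ T)
    (E : Matrix (Fin n) (Fin n) F) (hE : E ∈ T) (hEi : E * E = E) (hEs : Eᴴ = E)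
    (W W' : Submodule F (Fin n → F))
    (hW : IsIrred (T : Set (Matrix (Fin n) (Fin n) F)) W)
    (hW' : IsIrred (T : Set (Matrix (Fin n) (Fin n) F)) W')
    (hd : Module.finrank F (Submodule.map E.mulVecLin W) = 1)
    (hd' : Module.finrank F (Submodule.map E.mulVecLin W') = 1)
    (K : Matrix (Fin n) (Fin n) F) (hK : ∃ B ∈ T, K = E * B * E)
    (hgen : ∀ B ∈ T, ∃ q : Polynomial F,
      (∀ w ∈ W, (E * B * E).mulVec w = (Polynomial.aeval K q).mulVec (E.mulVec w)) ∧
      (∀ w ∈ W', (E * B * E).mulVec w = (Polynomial.aeval K q).mulVec (E.mulVec w)))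
    (w w' : Fin n → F)
    (hw : w ∈ Submodule.map E.mulVecLin W) (hw0 : w ≠ 0)
    (hw' : w' ∈ Submodule.map E.mulVecLin W') (hw0' : w' ≠ 0)
    (μ μ' : F) (hμ : K.mulVec w = μ • w) (hμ' : K.mulVec w' = μ' • w') :
    μ = μ' ↔ TIso (T : Set (Matrix (Fin n) (Fin n) F)) W W' := by
  have hEW : ∀ {v : Fin n → F} {U : Submodule F (Fin n → F)},
      v ∈ Submodule.map E.mulVecLin U → E.mulVec v = v := by
    rintro v U ⟨u, -, rfl⟩
    simp [Matrix.mulVec_mulVec, hEi]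
  have hEw := hEW hw
  have hEw' := hEW hw'
  have hwW : w ∈ W := by
    obtain ⟨u, hu, rfl⟩ := hw
    exact hW.2.1 E hE u hu
  have hwW' : w' ∈ W' := by
    obtain ⟨u, hu, rfl⟩ := hw'
    exact hW'.2.1 E hE u hu
  constructor
  · rintro rfl
    have key : ∀ B ∈ T, B.mulVec w = 0 ↔ B.mulVec w' = 0 := by
      intro B hB
      obtain ⟨q, hq, hq'⟩ := hgen (Bᴴ * B) (T.mul_mem (hTc B hB) hB)
      have h1 := hq w hwW
      have h2 := hq' w' hwW'
      rw [hEw, aeval_mulVec_eigen K q w μ hμ] at h1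
      rw [hEw', aeval_mulVec_eigen K q w' μ hμ'] at h2
      rw [mulVec_eq_zero_iff_of_eigen E B hEs w hEw hw0 _ h1,
        mulVec_eq_zero_iff_of_eigen E B hEs w' hEw' hw0' _ h2]
    obtain ⟨σ, hσ⟩ := exists_comp_eq_of_ker_le (orbitMap T w) (orbitMap T w')
      fun B hB => (key B B.2).1 hB
    have hR := range_orbitMap T W hW w hwW hw0
    have hR' := range_orbitMap T W' hW' w' hwW' hw0'
    refine ⟨σ, ⟨?_, ?_, ?_⟩, ?_⟩
    · intro v hv
      rw [← hR] at hv
      obtain ⟨B, rfl⟩ := hv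
      rw [hσ, ← hR']
      exact ⟨B, rfl⟩
    · intro u hu v hv huv
      rw [← hR] at hu hv
      obtain ⟨B, rfl⟩ := hu
      obtain ⟨C, rfl⟩ := hv
      rw [hσ, hσ, ← sub_eq_zero, ← map_sub] at huv
      rw [← sub_eq_zero, ← map_sub]
      exact (key _ (B - C).2).2 huv
    · intro v hv
      rw [← hR'] at hv
      obtain ⟨B, rfl⟩ := hv
      refine ⟨orbitMap T w B, ?_, hσ B⟩
      rw [← hR]
      exact ⟨B, rfl⟩
    · intro A hA v hv
      rw [← hR] at hv
      obtain ⟨B, rfl⟩ := hv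
      have hmul : ∀ u, A.mulVec (orbitMap T u B) = orbitMap T u (⟨A, hA⟩ * B) :=
        fun u => Matrix.mulVec_mulVec u A B
      rw [hmul, hσ, hσ, hmul]
  · rintro ⟨σ, ⟨hmap, hinj, -⟩, hcomm⟩
    have hKT : K ∈ T := by
      obtain ⟨B, hB, rfl⟩ := hK
      exact T.mul_mem (T.mul_mem hE hB) hE
    have hσw : σ w ∈ Submodule.map E.mulVecLin W' :=
      ⟨σ w, hmap hwW, by rw [Matrix.mulVecLin_apply, ← hcomm E hE w hwW, hEw]⟩
    obtain ⟨c, hc⟩ := (finrank_eq_one_iff_of_nonzero' (⟨w', hw'⟩ : Submodule.map E.mulVecLin W')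
      (by simpa [Subtype.ext_iff] using hw0')).1 hd' ⟨σ w, hσw⟩
    replace hc : c • w' = σ w := congrArg Subtype.val hc
    have hne : σ w ≠ 0 := fun h =>
      hw0 (hinj hwW W.zero_mem (by rw [h, map_zero]))
    have h := hcomm K hKT w hwW
    -- `K` acts on `σ w` by `μ` through `σ`, and by `μ'` because `σ w` is a multiple of `w'`.
    have h' : K.mulVec (σ w) = μ' • σ w := by
      rw [← hc, Matrix.mulVec_smul, hμ', smul_comm]
    rw [hμ, map_smul, h'] at h
    exact smul_left_injective F hne h
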